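/- arXiv:1609.06272 — 3 statements merged into one kernel-verified Lean document; each statement's English description precedes it below -/
import Mathlib

section
/- Let H be a complex Hilbert space, let χ and γ be bounded self-adjoint operators on H with 0 ≤ χ ≤ 1 and 0 ≤ γ, and let p ∈ [1/2, 1]. Then χ γ^p χ ≤ (χ γ χ)^p in the Loewner order. -/
/-!
Completing the square gives `z⋆c + c⋆z - z⋆mz ≤ c⋆m⁻¹c` for positive invertible `m`. If
`∑ cᵢ⋆cᵢ = 1` and `n = ∑ cᵢ⋆mᵢcᵢ`, then taking `z = cᵢn⁻¹` in the bound for `cᵢ` and `mᵢ` and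
summing yields `n⁻¹ ≤ ∑ cᵢ⋆mᵢ⁻¹cᵢ`, the operator Jensen inequality for the inverse. As `x ^ p` is
an integral of functions `t ^ p * (t⁻¹ - (t + x)⁻¹)` over `t > 0`, the reverse inequality follows
for powers with exponent in `[0, 1]`. A contraction `c` is completed to such a family by
`√(1 - c⋆c)`, with the operator `0` attached to the second member.
-/

section OperatorJensen

open Real Set MeasureTheory
open scoped NNReal Ring

lemma sum_star_mul_algebraMap_mul {R A ι : Type*} [CommSemiring R] [Semiring A] [Algebra R A]
    [Star A] [Fintype ι] {c : ι → A} (hc : ∑ i, star (c i) * c i = 1) (r : R) :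
    ∑ i, star (c i) * algebraMap R A r * c i = algebraMap R A r := by
  simp only [← Algebra.commutes r, mul_assoc, ← Finset.mul_sum, hc, mul_one]

lemma sum_conjugate_nonneg {R ι : Type*} [NonUnitalSemiring R] [PartialOrder R] [StarRing R]
    [StarOrderedRing R] [Fintype ι] {a : ι → R} (ha : ∀ i, 0 ≤ a i) (c : ι → R) :
    0 ≤ ∑ i, star (c i) * a i * c i :=
  Finset.sum_nonneg fun i _ ↦ star_left_conjugate_nonneg (ha i) (c i)

variable {A : Type*} [CStarAlgebra A] [PartialOrder A] [StarOrderedRing A]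

lemma le_star_mul_ringInverse_mul {m : A} (hm : IsStrictlyPositive m) (c z : A) :
    star z * c + star c * z - star z * m * z ≤ star c * m⁻¹ʳ * c := by
  have hsquare : star (c - m * z) * m⁻¹ʳ * (c - m * z) =
      star c * m⁻¹ʳ * c - (star z * c + star c * z - star z * m * z) := by
    have hc : m * (m⁻¹ʳ * c) = c := Ring.mul_inverse_cancel_left _ _ hm.isUnit
    have hz : m⁻¹ʳ * (m * z) = z := Ring.inverse_mul_cancel_left _ _ hm.isUnit
    simp only [star_sub, star_mul, hm.isSelfAdjoint.star_eq, sub_mul, mul_sub, mul_assoc, hc, hz]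
    abel
  exact sub_nonneg.mp (hsquare ▸ star_left_conjugate_nonneg hm.ringInverse.nonneg _)

variable {ι : Type*} [Fintype ι] {a c : ι → A}

lemma isStrictlyPositive_sum_conjugate (hc : ∑ i, star (c i) * c i = 1)
    (ha : ∀ i, IsStrictlyPositive (a i)) : IsStrictlyPositive (∑ i, star (c i) * a i * c i) := by
  nontriviality A
  rcases isEmpty_or_nonempty ι with _ | _
  · simp at hc
  choose r hr hra using fun i ↦ (CFC.exists_pos_algebraMap_le_iff (ha i).isSelfAdjoint).mpr
    fun _ ↦ (ha i).spectrum_pos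
  obtain ⟨j, hj⟩ := Finite.exists_min r
  refine (isStrictlyPositive_algebraMap (hr j)).of_le ?_
  rw [← sum_star_mul_algebraMap_mul hc]
  gcongr with i
  exact star_left_conjugate_le_conjugate ((algebraMap_le_algebraMap.mpr (hj i)).trans (hra i)) _

lemma ringInverse_sum_conjugate_le (hc : ∑ i, star (c i) * c i = 1)
    (ha : ∀ i, IsStrictlyPositive (a i)) :
    (∑ i, star (c i) * a i * c i)⁻¹ʳ ≤ ∑ i, star (c i) * (a i)⁻¹ʳ * c i := by
  set n := ∑ i, star (c i) * a i * c i with hn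
  have hnpos : IsStrictlyPositive n := isStrictlyPositive_sum_conjugate hc ha
  have hnstar : star n⁻¹ʳ = n⁻¹ʳ := hnpos.ringInverse.isSelfAdjoint.star_eq
  have hleft : ∑ i, star (c i * n⁻¹ʳ) * c i = n⁻¹ʳ := by
    simp only [star_mul, hnstar, mul_assoc, ← Finset.mul_sum, hc, mul_one]
  have hright : ∑ i, star (c i) * (c i * n⁻¹ʳ) = n⁻¹ʳ := by
    simp only [← mul_assoc, ← Finset.sum_mul, hc, one_mul]
  have hmid : ∑ i, star (c i * n⁻¹ʳ) * a i * (c i * n⁻¹ʳ) = n⁻¹ʳ := by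
    calc ∑ i, star (c i * n⁻¹ʳ) * a i * (c i * n⁻¹ʳ)
        = n⁻¹ʳ * (∑ i, star (c i) * a i * c i) * n⁻¹ʳ := by
          simp only [Finset.mul_sum, Finset.sum_mul, star_mul, hnstar, mul_assoc]
      _ = n⁻¹ʳ := by rw [← hn, Ring.inverse_mul_cancel _ hnpos.isUnit, one_mul]
  calc n⁻¹ʳ = ∑ i, (star (c i * n⁻¹ʳ) * c i + star (c i) * (c i * n⁻¹ʳ) -
          star (c i * n⁻¹ʳ) * a i * (c i * n⁻¹ʳ)) := by
        rw [Finset.sum_sub_distrib, Finset.sum_add_distrib, hleft, hright, hmid,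
          add_sub_cancel_right]
    _ ≤ ∑ i, star (c i) * (a i)⁻¹ʳ * c i :=
        Finset.sum_le_sum fun i _ ↦ le_star_mul_ringInverse_mul (ha i) _ _

lemma cfcₙ_rpowIntegrand₀₁_eq_smul_sub_ringInverse (p : ℝ) {t : ℝ} (ht : 0 < t) {x : A}
    (hx : 0 ≤ x) :
    cfcₙ (rpowIntegrand₀₁ p t) x =
      t ^ p • (algebraMap ℝ A t⁻¹ - (algebraMap ℝ A t + x)⁻¹ʳ) := by
  have hne : ∀ r ∈ quasispectrum ℝ x, t + r ≠ 0 := by grind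
  have hinv : ContinuousOn (fun r : ℝ ↦ (t + r)⁻¹) (quasispectrum ℝ x) := by
    fun_prop (disch := assumption)
  have hsub : ContinuousOn (fun r : ℝ ↦ t⁻¹ - (t + r)⁻¹) (quasispectrum ℝ x) :=
    continuousOn_const.sub hinv
  have hspec := spectrum_subset_quasispectrum ℝ x
  unfold rpowIntegrand₀₁
  rw [cfcₙ_eq_cfc (hsub.const_mul _) (by simp), cfc_const_mul _ _ x (hsub.mono hspec),
    cfc_sub _ _ x continuousOn_const (hinv.mono hspec), cfc_const ..,
    cfc_inv _ _ (fun r hr ↦ hne r (hspec hr)) .., cfc_const_add .., cfc_id' ..]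

lemma sum_conjugate_cfcₙ_rpowIntegrand₀₁_le (hc : ∑ i, star (c i) * c i = 1)
    (ha : ∀ i, 0 ≤ a i) (p : ℝ) {t : ℝ} (ht : 0 < t) :
    ∑ i, star (c i) * cfcₙ (rpowIntegrand₀₁ p t) (a i) * c i ≤
      cfcₙ (rpowIntegrand₀₁ p t) (∑ i, star (c i) * a i * c i) := by
  have hpos i : IsStrictlyPositive (algebraMap ℝ A t + a i) := by grind
  have hshift : ∑ i, star (c i) * (algebraMap ℝ A t + a i) * c i =
      algebraMap ℝ A t + ∑ i, star (c i) * a i * c i := by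
    simp only [mul_add, add_mul, Finset.sum_add_distrib, sum_star_mul_algebraMap_mul hc]
  calc ∑ i, star (c i) * cfcₙ (rpowIntegrand₀₁ p t) (a i) * c i
      = t ^ p • (algebraMap ℝ A t⁻¹ - ∑ i, star (c i) * (algebraMap ℝ A t + a i)⁻¹ʳ * c i) := by
        simp only [cfcₙ_rpowIntegrand₀₁_eq_smul_sub_ringInverse p ht (ha _), mul_smul_comm,
          smul_mul_assoc, mul_sub, sub_mul, ← Finset.smul_sum, Finset.sum_sub_distrib,
          sum_star_mul_algebraMap_mul hc]
    _ ≤ t ^ p • (algebraMap ℝ A t⁻¹ - (algebraMap ℝ A t + ∑ i, star (c i) * a i * c i)⁻¹ʳ) := by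
        gcongr
        exact hshift ▸ ringInverse_sum_conjugate_le hc hpos
    _ = cfcₙ (rpowIntegrand₀₁ p t) (∑ i, star (c i) * a i * c i) :=
        (cfcₙ_rpowIntegrand₀₁_eq_smul_sub_ringInverse p ht (sum_conjugate_nonneg ha c)).symm

lemma sum_conjugate_nnrpow_le_of_mem_Ioo (hc : ∑ i, star (c i) * c i = 1) (ha : ∀ i, 0 ≤ a i)
    {p : ℝ≥0} (hp : p ∈ Ioo 0 1) :
    ∑ i, star (c i) * a i ^ p * c i ≤ (∑ i, star (c i) * a i * c i) ^ p := by
  have hsum := sum_conjugate_nonneg ha c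
  obtain ⟨μ, hμ⟩ := CFC.exists_measure_nnrpow_eq_integral_cfcₙ_rpowIntegrand₀₁ A hp
  have hint i : IntegrableOn (fun t ↦ star (c i) * cfcₙ (rpowIntegrand₀₁ p t) (a i) * c i)
      (Ioi 0) μ := ((hμ (a i) (ha i)).1.const_mul _).mul_const _
  calc ∑ i, star (c i) * a i ^ p * c i
      = ∑ i, ∫ t in Ioi 0, star (c i) * cfcₙ (rpowIntegrand₀₁ p t) (a i) * c i ∂μ := by
        refine Finset.sum_congr rfl fun i _ ↦ ?_
        obtain ⟨hi, hpow⟩ := hμ (a i) (ha i)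
        rw [hpow, integral_mul_const_of_integrable (hi.const_mul _),
          integral_const_mul_of_integrable hi]
    _ = ∫ t in Ioi 0, ∑ i, star (c i) * cfcₙ (rpowIntegrand₀₁ p t) (a i) * c i ∂μ :=
        (integral_finsetSum _ fun i _ ↦ hint i).symm
    _ ≤ ∫ t in Ioi 0, cfcₙ (rpowIntegrand₀₁ p t) (∑ i, star (c i) * a i * c i) ∂μ :=
        setIntegral_mono_on (integrable_finsetSum _ fun i _ ↦ hint i) (hμ _ hsum).1
          measurableSet_Ioi fun t ht ↦ sum_conjugate_cfcₙ_rpowIntegrand₀₁_le hc ha p ht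
    _ = (∑ i, star (c i) * a i * c i) ^ p := (hμ _ hsum).2.symm

lemma sum_conjugate_rpow_le (hc : ∑ i, star (c i) * c i = 1) (ha : ∀ i, 0 ≤ a i) {p : ℝ}
    (hp : p ∈ Icc 0 1) :
    ∑ i, star (c i) * a i ^ p * c i ≤ (∑ i, star (c i) * a i * c i) ^ p := by
  have hsum := sum_conjugate_nonneg ha c
  lift p to ℝ≥0 using hp.1
  obtain rfl | hp0 := eq_zero_or_pos p
  · simp [CFC.rpow_zero _ hsum, CFC.rpow_zero _ (ha _), hc]
  obtain rfl | hp1 := eq_or_ne p 1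
  · simp [CFC.rpow_one _ hsum, CFC.rpow_one _ (ha _)]
  simp only [← CFC.nnrpow_eq_rpow hp0]
  exact sum_conjugate_nnrpow_le_of_mem_Ioo hc ha ⟨hp0, hp1.lt_of_le (mod_cast hp.2)⟩

theorem chi_pow_chi_le_general {a c : A} (ha : 0 ≤ a) (hc : ‖c‖ ≤ 1) {p : ℝ}
    (hp : p ∈ Icc 0 1) : star c * a ^ p * c ≤ (star c * a * c) ^ p := by
  have hcc : star c * c ≤ 1 := by
    rw [← CStarAlgebra.norm_le_one_iff_of_nonneg _ (star_mul_self_nonneg c),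
      CStarRing.norm_star_mul_self]
    exact mul_le_one₀ hc (norm_nonneg c) hc
  set d := CFC.sqrt (1 - star c * c)
  have hd : star d * d = 1 - star c * c := by
    rw [(CFC.sqrt_nonneg _).isSelfAdjoint.star_eq, CFC.sqrt_mul_sqrt_self _ (sub_nonneg.mpr hcc)]
  calc star c * a ^ p * c ≤ star c * a ^ p * c + star d * 0 ^ p * d :=
        le_add_of_nonneg_right (star_left_conjugate_nonneg CFC.rpow_nonneg d)
    _ ≤ (star c * a * c + star d * 0 * d) ^ p := by
        simpa using sum_conjugate_rpow_le (a := ![a, 0]) (c := ![c, d])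
          (by simp [hd]) (by simp [Fin.forall_fin_two, ha]) hp
    _ = (star c * a * c) ^ p := by simp

end OperatorJensen

/-- **Loewner order inequality for fractional powers, `p ∈ [1/2, 1]`.**
If `χ, γ` are bounded self-adjoint operators on a complex Hilbert space `H` with
`0 ≤ χ ≤ 1` and `0 ≤ γ` (Loewner order), and `p ∈ [1/2, 1]`, then
`χ γ^p χ ≤ (χ γ χ)^p`, where powers are taken via the continuous functional calculus. -/
theorem chi_pow_chi_le {H : Type*} [NormedAddCommGroup H] [InnerProductSpace ℂ H]
    [CompleteSpace H] (χ γ : H →L[ℂ] H)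
    (hχsa : IsSelfAdjoint χ) (hγsa : IsSelfAdjoint γ)
    (hχ0 : (0 : H →L[ℂ] H) ≤ χ) (hχ1 : χ ≤ 1) (hγ0 : (0 : H →L[ℂ] H) ≤ γ)
    (p : ℝ) (hp : p ∈ Set.Icc (1 / 2 : ℝ) 1) :
    χ * cfc (fun x : ℝ => x ^ p) γ * χ ≤ cfc (fun x : ℝ => x ^ p) (χ * γ * χ) := by
  have hχ : ‖χ‖ ≤ 1 := (CStarAlgebra.norm_le_one_iff_of_nonneg χ hχ0).mpr hχ1
  have h := chi_pow_chi_le_general hγ0 hχ ⟨one_half_pos.le.trans hp.1, hp.2⟩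
  rwa [CFC.rpow_eq_cfc_real, CFC.rpow_eq_cfc_real (star_left_conjugate_nonneg hγ0 χ),
    hχsa.star_eq] at h
end

section
/- (Newton's theorem, sphere average form.) For every r > 0 and every y ∈ ℝ³, (1/(4π)) ∫_{S²} |rν − y|^{-1} dσ(ν) = 1/max(r, |y|), where σ is the surface measure on the unit sphere S² ⊂ ℝ³ (with total mass 4π). -/
open MeasureTheory

/-!
By Archimedes' hat-box theorem the orthogonal projection of the surface measure of `S²` to a
diameter is `2π` times Lebesgue measure on `[-1, 1]`. Since `‖rν - y‖` depends only on the height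
`t` of `ν` in the direction of `y`, the average becomes half the integral over `[-1, 1]` of
`(r² + ‖y‖² - 2r‖y‖t)^(-1/2)`, which is elementary.

For the hat-box theorem, the surface measure of a subset of `S²` is three times the volume of the
cone over it in the unit ball. The map `x ↦ (⟪e, x⟫, ‖x‖²)` pushes volume forward to `π` times
Lebesgue measure on `{(h, s) | h² ≤ s}`, because the squared norm on a plane pushes area forward to
`π` times Lebesgue measure on `[0, ∞)`. At squared radius `s`, the cone is then a linear section
scaled by `√s`.
-/

open Module Set
open scoped Pointwise RealInnerProductSpace

lemma integral_inv_sqrt {a b : ℝ} (ha : 0 ≤ a) (hb : 0 ≤ b) :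
    ∫ u in a..b, (√u)⁻¹ = 2 * (√b - √a) := by
  have inv_sqrt_eq_rpow : EqOn (fun u : ℝ ↦ (√u)⁻¹) (fun u ↦ u ^ (-(1 / 2) : ℝ)) (uIcc a b) := by
    intro u hu
    have hu_nonneg : 0 ≤ u := (le_inf ha hb).trans hu.1
    simp only [Real.sqrt_eq_rpow, Real.rpow_neg hu_nonneg]
  rw [intervalIntegral.integral_congr inv_sqrt_eq_rpow, integral_rpow (by norm_num),
    Real.sqrt_eq_rpow, Real.sqrt_eq_rpow]
  have exponent_eq : -(1 / 2) + 1 = (1 / 2 : ℝ) := by norm_num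
  rw [exponent_eq]
  ring

lemma abs_add_sub_abs_sub {r s : ℝ} (hr : 0 ≤ r) (hs : 0 ≤ s) :
    |r + s| - |r - s| = 2 * min r s := by
  rw [abs_of_nonneg (add_nonneg hr hs), ← max_sub_min_eq_abs']
  linarith [max_add_min r s]

lemma integral_inv_sqrt_sq_add_sq_sub {r s : ℝ} (hr : 0 < r) (hs : 0 ≤ s) :
    ∫ t in (-1 : ℝ)..1, (√(r ^ 2 + s ^ 2 - 2 * r * s * t))⁻¹ = 2 / max r s := by
  rcases hs.eq_or_lt with rfl | hs
  · norm_num [Real.sqrt_sq hr.le, max_eq_left hr.le, div_eq_mul_inv]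
  have hrs : 2 * r * s ≠ 0 := by positivity
  have hmax : max r s ≠ 0 := (lt_max_of_lt_left hr).ne'
  have lower : r ^ 2 + s ^ 2 - 2 * r * s * 1 = (r - s) ^ 2 := by ring
  have upper : r ^ 2 + s ^ 2 - 2 * r * s * (-1) = (r + s) ^ 2 := by ring
  calc ∫ t in (-1 : ℝ)..1, (√(r ^ 2 + s ^ 2 - 2 * r * s * t))⁻¹
      = (2 * r * s)⁻¹ * ∫ u in (r - s) ^ 2..(r + s) ^ 2, (√u)⁻¹ := by
        rw [intervalIntegral.integral_comp_sub_mul (fun u ↦ (√u)⁻¹) hrs, lower, upper, smul_eq_mul]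
    _ = (2 * r * s)⁻¹ * (2 * (2 * min r s)) := by
        rw [integral_inv_sqrt (sq_nonneg _) (sq_nonneg _), Real.sqrt_sq_eq_abs,
          Real.sqrt_sq_eq_abs, abs_add_sub_abs_sub hr.le hs.le]
    _ = 2 / max r s := by
        field_simp
        linarith [min_mul_max r s]

lemma lintegral_sqrt_Ioo_zero_one : ∫⁻ s in Ioo (0 : ℝ) 1, ENNReal.ofReal √s = 2 / 3 := by
  have integrable_sqrt : IntegrableOn (fun s : ℝ ↦ √s) (Ioo 0 1) :=
    Real.continuous_sqrt.integrableOn_Icc.mono_set Ioo_subset_Icc_self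
  have integral_sqrt : ∫ s in Ioo (0 : ℝ) 1, √s = 2 / 3 := by
    rw [← integral_Ioc_eq_integral_Ioo, ← intervalIntegral.integral_of_le zero_le_one]
    simp_rw [Real.sqrt_eq_rpow]
    rw [integral_rpow (by norm_num)]
    norm_num
  rw [← ofReal_integral_eq_lintegral_ofReal integrable_sqrt
    (Filter.Eventually.of_forall Real.sqrt_nonneg), integral_sqrt,
    ENNReal.ofReal_div_of_pos three_pos, ENNReal.ofReal_ofNat, ENNReal.ofReal_ofNat]

lemma volume_setOf_inv_sqrt_mul_mem {B : Set ℝ} (hB : MeasurableSet B) :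
    volume {p : ℝ × ℝ | p.2 ∈ Ioo 0 1 ∧ (√p.2)⁻¹ * p.1 ∈ B} = 2 / 3 * volume B := by
  have measurable_scale : Measurable fun p : ℝ × ℝ ↦ (√p.2)⁻¹ * p.1 := by fun_prop
  have measurable_region :
      MeasurableSet {p : ℝ × ℝ | p.2 ∈ Ioo 0 1 ∧ (√p.2)⁻¹ * p.1 ∈ B} :=
    (measurable_snd measurableSet_Ioo).inter (measurable_scale hB)
  have section_eq (s : ℝ) :
      (fun h ↦ (h, s)) ⁻¹' {p : ℝ × ℝ | p.2 ∈ Ioo 0 1 ∧ (√p.2)⁻¹ * p.1 ∈ B} =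
        {h | s ∈ Ioo 0 1 ∧ (√s)⁻¹ * h ∈ B} := rfl
  have section_volume (s : ℝ) :
      volume {h | s ∈ Ioo 0 1 ∧ (√s)⁻¹ * h ∈ B} =
        (Ioo 0 1).indicator (fun s ↦ ENNReal.ofReal √s * volume B) s := by
    by_cases hs : s ∈ Ioo (0 : ℝ) 1
    · have hsqrt : 0 < √s := Real.sqrt_pos.2 hs.1
      simp only [hs, true_and, indicator_of_mem]
      simpa only [inv_inv, abs_of_pos hsqrt, preimage, mem_ofPred_eq]
        using Real.volume_preimage_mul_left (inv_pos.2 hsqrt).ne' B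
    · simp only [hs, false_and, ofPred_false, measure_empty, not_false_eq_true,
        indicator_of_notMem]
  rw [Measure.volume_eq_prod, Measure.prod_apply_symm measurable_region]
  simp_rw [section_eq, section_volume]
  rw [lintegral_indicator measurableSet_Ioo, lintegral_mul_const _ (by fun_prop),
    lintegral_sqrt_Ioo_zero_one]

lemma setOf_inv_sqrt_mul_mem_inter_setOf_sq_le (A : Set ℝ) :
    {p : ℝ × ℝ | p.2 ∈ Ioo 0 1 ∧ (√p.2)⁻¹ * p.1 ∈ A} ∩ {p | p.1 ^ 2 ≤ p.2} =
      {p | p.2 ∈ Ioo 0 1 ∧ (√p.2)⁻¹ * p.1 ∈ A ∩ Icc (-1) 1} := by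
  ext ⟨h, s⟩
  simp only [mem_inter_iff, mem_ofPred_eq, and_assoc]
  refine and_congr_right fun hs ↦ and_congr_right fun _ ↦ ?_
  have hsqrt : 0 < √s := Real.sqrt_pos.2 hs.1
  rw [mem_Icc, ← abs_le, abs_mul, abs_of_pos (inv_pos.2 hsqrt), inv_mul_le_iff₀ hsqrt, mul_one,
    Real.le_sqrt (abs_nonneg h) hs.1.le, sq_abs]

lemma measurePreserving_prodMk_sq_add :
    MeasurePreserving (fun p : ℝ × ℝ ↦ (p.1, p.1 ^ 2 + p.2))
      ((volume : Measure ℝ).prod ((volume : Measure ℝ).restrict (Ici 0)))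
      ((volume : Measure (ℝ × ℝ)).restrict {p | p.1 ^ 2 ≤ p.2}) := by
  have shear : MeasurePreserving (fun p : ℝ × ℝ ↦ (p.1, p.1 ^ 2 + p.2)) :=
    (MeasurePreserving.id volume).skew_product (g := fun h w ↦ h ^ 2 + w) (by fun_prop)
      (Filter.Eventually.of_forall fun h ↦ (measurePreserving_add_left volume (h ^ 2)).map_eq)
  have preimage_eq :
      (fun p : ℝ × ℝ ↦ (p.1, p.1 ^ 2 + p.2)) ⁻¹' {p | p.1 ^ 2 ≤ p.2} = univ ×ˢ Ici 0 := by
    ext p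
    simp
  have measurable_region : MeasurableSet {p : ℝ × ℝ | p.1 ^ 2 ≤ p.2} :=
    measurableSet_le (by fun_prop) (by fun_prop)
  convert! shear.restrict_preimage measurable_region using 1
  rw [preimage_eq, Measure.volume_eq_prod, ← Measure.prod_restrict, Measure.restrict_univ]

section Sphere

variable {E : Type*} [NormedAddCommGroup E]

lemma Ioo_smul_image_preimage_sphere [NormedSpace ℝ E] (U : Set E) :
    Ioo (0 : ℝ) 1 • ((↑) '' ((↑) ⁻¹' U : Set (Metric.sphere (0 : E) 1)) : Set E) =
      {x | ‖x‖ ∈ Ioo 0 1 ∧ ‖x‖⁻¹ • x ∈ U} := by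
  ext x
  constructor
  · rintro ⟨c, hc, _, ⟨u, hu, rfl⟩, rfl⟩
    have norm_smul_u : ‖c • (u : E)‖ = c := by
      rw [norm_smul, norm_eq_of_mem_sphere, mul_one, Real.norm_of_nonneg hc.1.le]
    refine ⟨norm_smul_u.symm ▸ hc, ?_⟩
    rwa [norm_smul_u, inv_smul_smul₀ hc.1.ne']
  · rintro ⟨hx, hxU⟩
    have normalized_mem : ‖x‖⁻¹ • x ∈ Metric.sphere (0 : E) 1 := by
      simp [norm_smul, hx.1.ne']
    exact ⟨‖x‖, hx, _, ⟨⟨_, normalized_mem⟩, hxU, rfl⟩, smul_inv_smul₀ hx.1.ne' x⟩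

lemma toSphere_preimage [NormedSpace ℝ E] [MeasurableSpace E] [BorelSpace E] (μ : Measure E)
    {U : Set E} (hU : MeasurableSet U) :
    μ.toSphere ((↑) ⁻¹' U) = finrank ℝ E * μ {x | ‖x‖ ∈ Ioo 0 1 ∧ ‖x‖⁻¹ • x ∈ U} := by
  rw [Measure.toSphere_apply' μ (measurable_subtype_coe hU), Ioo_smul_image_preimage_sphere]

lemma norm_smul_sub_smul_eq_sqrt [InnerProductSpace ℝ E] {u e : E} (hu : ‖u‖ = 1) (he : ‖e‖ = 1)
    (r s : ℝ) : ‖r • u - s • e‖ = √(r ^ 2 + s ^ 2 - 2 * r * s * ⟪e, u⟫) := by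
  have sq_eq : ‖r • u - s • e‖ ^ 2 = r ^ 2 + s ^ 2 - 2 * r * s * ⟪e, u⟫ := by
    rw [norm_sub_sq_real, norm_smul, norm_smul, hu, he, real_inner_smul_left,
      real_inner_smul_right, real_inner_comm, mul_one, mul_one, Real.norm_eq_abs,
      Real.norm_eq_abs, sq_abs, sq_abs]
    ring
  rw [← sq_eq, Real.sqrt_sq (norm_nonneg _)]

lemma exists_norm_eq_one_and_norm_smul_eq [NormedSpace ℝ E] [Nontrivial E] (y : E) :
    ∃ e : E, ‖e‖ = 1 ∧ ‖y‖ • e = y := by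
  by_cases hy : y = 0
  · obtain ⟨e, he⟩ := exists_norm_eq E zero_le_one
    exact ⟨e, he, by simp [hy]⟩
  · exact ⟨NormedSpace.normalize y, NormedSpace.norm_normalize hy,
      NormedSpace.norm_smul_normalize y⟩

end Sphere

section Volume

variable {E : Type*} [NormedAddCommGroup E] [InnerProductSpace ℝ E] [FiniteDimensional ℝ E]
  [MeasurableSpace E] [BorelSpace E]

lemma volume_setOf_norm_sq_lt (hE : finrank ℝ E = 2) (b : ℝ) :
    volume {v : E | ‖v‖ ^ 2 < b} = NNReal.pi * ENNReal.ofReal b := by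
  have : Nontrivial E := nontrivial_of_finrank_pos (R := ℝ) (by lia)
  have eq_ball : {v : E | ‖v‖ ^ 2 < b} = Metric.ball 0 √b := by
    ext v
    simp [Real.lt_sqrt]
  rw [eq_ball, InnerProductSpace.volume_ball_of_dim_even (k := 1) hE, hE,
    ← ENNReal.ofReal_pow (Real.sqrt_nonneg b), Real.sq_sqrt', ENNReal.ofReal_max, mul_comm]
  simp [← NNReal.coe_real_pi]

lemma measurePreserving_norm_sq (hE : finrank ℝ E = 2) :
    MeasurePreserving (fun v : E ↦ ‖v‖ ^ 2) volume
      (NNReal.pi • (volume : Measure ℝ).restrict (Ici 0)) := by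
  have measurable_norm_sq : Measurable fun v : E ↦ ‖v‖ ^ 2 := by fun_prop
  refine ⟨measurable_norm_sq, (Measure.ext_of_Ico _ _ fun a b hab ↦ ?_).symm⟩
  have preimage_Ico :
      (fun v : E ↦ ‖v‖ ^ 2) ⁻¹' Ico a b = {v | ‖v‖ ^ 2 < b} \ {v | ‖v‖ ^ 2 < a} := by
    ext v
    simp [and_comm]
  have sublevel_mono : {v : E | ‖v‖ ^ 2 < a} ⊆ {v | ‖v‖ ^ 2 < b} := fun v hv ↦ hv.trans hab
  have volume_diff :
      volume ((fun v : E ↦ ‖v‖ ^ 2) ⁻¹' Ico a b) =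
        NNReal.pi * (ENNReal.ofReal b - ENNReal.ofReal a) := by
    rw [preimage_Ico, measure_sdiff sublevel_mono
      (measurableSet_lt measurable_norm_sq measurable_const).nullMeasurableSet
      (by rw [volume_setOf_norm_sq_lt hE]; finiteness),
      volume_setOf_norm_sq_lt hE, volume_setOf_norm_sq_lt hE, ENNReal.mul_sub (by simp)]
  have volume_Ico : volume (Ico a b ∩ Ici 0) = ENNReal.ofReal b - ENNReal.ofReal a := by
    have inter_eq : Ico a b ∩ Ici 0 = Ico (max a 0) b := by
      ext t
      simp only [mem_inter_iff, mem_Ico, mem_Ici, max_le_iff]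
      tauto
    rw [inter_eq, Real.volume_Ico, ENNReal.ofReal_sub _ (le_max_right a 0), ENNReal.ofReal_max,
      ENNReal.ofReal_zero, max_eq_left zero_le]
  rw [Measure.map_apply measurable_norm_sq measurableSet_Ico, volume_diff, Measure.smul_apply,
    Measure.restrict_apply measurableSet_Ico, volume_Ico]
  rfl

lemma measurePreserving_inner_orthogonalProjection {e : E} (he : ‖e‖ = 1) :
    MeasurePreserving (fun x : E ↦ (⟪e, x⟫, (ℝ ∙ e)ᗮ.orthogonalProjectionOnto x)) := by
  let coord := LinearIsometryEquiv.toSpanUnitSingleton (𝕜 := ℝ) e he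
  have coord_symm (x : E) : coord.symm ((ℝ ∙ e).orthogonalProjectionOnto x) = ⟪e, x⟫ := by
    rw [LinearIsometryEquiv.symm_apply_eq]
    exact Subtype.ext (Submodule.starProjection_unit_singleton ℝ he x)
  have decomposition := (WithLp.volume_preserving_ofLp _ _).comp
    (ℝ ∙ e).orthogonalDecomposition.measurePreserving
  have coordinates := (coord.symm.measurePreserving.prod (MeasurePreserving.id volume)).comp
    decomposition
  convert! coordinates using 2 with x
  simp [coord_symm]

lemma measurePreserving_inner_norm_sq (hE : finrank ℝ E = 3) {e : E} (he : ‖e‖ = 1) :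
    MeasurePreserving (fun x : E ↦ (⟪e, x⟫, ‖x‖ ^ 2)) volume
      (NNReal.pi • (volume : Measure (ℝ × ℝ)).restrict {p | p.1 ^ 2 ≤ p.2}) := by
  have finrank_orthogonal : finrank ℝ (ℝ ∙ e)ᗮ = 2 :=
    have : Fact (finrank ℝ E = 2 + 1) := ⟨hE⟩
    Submodule.finrank_orthogonal_span_singleton (norm_ne_zero_iff.1 (he ▸ one_ne_zero))
  have norm_sq_eq (x : E) :
      ‖x‖ ^ 2 = ⟪e, x⟫ ^ 2 + ‖(ℝ ∙ e)ᗮ.orthogonalProjectionOnto x‖ ^ 2 := by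
    rw [Submodule.norm_sq_eq_add_norm_sq_projection x (ℝ ∙ e),
      Submodule.coe_norm ((ℝ ∙ e).orthogonalProjectionOnto x),
      Submodule.coe_orthogonalProjectionOnto_apply, Submodule.starProjection_unit_singleton ℝ he,
      norm_smul, he, mul_one, Real.norm_eq_abs, sq_abs]
  have cylindrical : MeasurePreserving
      (fun x : E ↦ (⟪e, x⟫, ‖(ℝ ∙ e)ᗮ.orthogonalProjectionOnto x‖ ^ 2)) volume
      (NNReal.pi • (volume : Measure ℝ).prod ((volume : Measure ℝ).restrict (Ici 0))) := by
    rw [← Measure.prod_smul_right]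
    exact ((MeasurePreserving.id volume).prod
      (measurePreserving_norm_sq finrank_orthogonal)).comp
        (measurePreserving_inner_orthogonalProjection he)
  simpa only [Function.comp_def, ← norm_sq_eq] using
    (measurePreserving_prodMk_sq_add.smul_measure NNReal.pi).comp cylindrical

/-- Archimedes' hat-box theorem. -/
theorem map_inner_toSphere (hE : finrank ℝ E = 3) {e : E} (he : ‖e‖ = 1) :
    Measure.map (fun u : Metric.sphere (0 : E) 1 ↦ ⟪e, (u : E)⟫) (volume : Measure E).toSphere =
      (2 * NNReal.pi) • (volume : Measure ℝ).restrict (Icc (-1) 1) := by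
  ext A hA
  let cone : Set (ℝ × ℝ) := {p | p.2 ∈ Ioo 0 1 ∧ (√p.2)⁻¹ * p.1 ∈ A}
  have measurable_cone : MeasurableSet cone := (measurable_snd measurableSet_Ioo).inter
    ((by fun_prop : Measurable fun p : ℝ × ℝ ↦ (√p.2)⁻¹ * p.1) hA)
  have measurable_inner : Measurable fun x : E ↦ ⟪e, x⟫ := by fun_prop
  have preimage_cone : {x : E | ‖x‖ ∈ Ioo 0 1 ∧ ‖x‖⁻¹ • x ∈ (fun x ↦ ⟪e, x⟫) ⁻¹' A} =
      (fun x : E ↦ (⟪e, x⟫, ‖x‖ ^ 2)) ⁻¹' cone := by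
    ext x
    simp only [cone, mem_preimage, mem_ofPred_eq, mem_Ioo, real_inner_smul_right,
      Real.sqrt_sq (norm_nonneg x), sq_lt_one_iff₀ (norm_nonneg x), sq_pos_iff,
      norm_pos_iff, norm_ne_zero_iff]
  calc Measure.map (fun u : Metric.sphere (0 : E) 1 ↦ ⟪e, (u : E)⟫) (volume : Measure E).toSphere A
      = (volume : Measure E).toSphere ((↑) ⁻¹' ((fun x : E ↦ ⟪e, x⟫) ⁻¹' A)) :=
        Measure.map_apply (by fun_prop) hA
    _ = 3 * volume ((fun x : E ↦ (⟪e, x⟫, ‖x‖ ^ 2)) ⁻¹' cone) := by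
        rw [toSphere_preimage _ (measurable_inner hA), hE, preimage_cone, Nat.cast_ofNat]
    _ = 3 * (NNReal.pi * volume (cone ∩ {p | p.1 ^ 2 ≤ p.2})) := by
        rw [(measurePreserving_inner_norm_sq hE he).measure_preimage
          measurable_cone.nullMeasurableSet, Measure.smul_apply,
          Measure.restrict_apply measurable_cone, ENNReal.smul_def, smul_eq_mul]
    _ = 3 * (NNReal.pi * (2 / 3 * volume (A ∩ Icc (-1) 1))) := by
        rw [setOf_inv_sqrt_mul_mem_inter_setOf_sq_le,
          volume_setOf_inv_sqrt_mul_mem (hA.inter measurableSet_Icc)]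
    _ = 3 * (2 / 3) * NNReal.pi * volume (A ∩ Icc (-1) 1) := by ring
    _ = ((2 * NNReal.pi) • (volume : Measure ℝ).restrict (Icc (-1) 1)) A := by
        rw [ENNReal.mul_div_cancel three_ne_zero ENNReal.ofNat_ne_top, Measure.smul_apply,
          Measure.restrict_apply hA, ENNReal.smul_def, smul_eq_mul, ENNReal.coe_mul,
          ENNReal.coe_ofNat]

theorem integral_comp_inner_toSphere {F : Type*} [NormedAddCommGroup F] [NormedSpace ℝ F]
    (hE : finrank ℝ E = 3) {e : E} (he : ‖e‖ = 1) {f : ℝ → F}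
    (hf : AEStronglyMeasurable f (volume.restrict (Icc (-1) 1))) :
    ∫ u : Metric.sphere (0 : E) 1, f ⟪e, (u : E)⟫ ∂(volume : Measure E).toSphere =
      (2 * Real.pi) • ∫ t in (-1)..1, f t := by
  rw [← integral_map (φ := fun u : Metric.sphere (0 : E) 1 ↦ ⟪e, (u : E)⟫) (by fun_prop)
      (by rw [map_inner_toSphere hE he]; exact hf.smul_measure _),
    map_inner_toSphere hE he, integral_smul_nnreal_measure, integral_Icc_eq_integral_Ioc,
    ← intervalIntegral.integral_of_le (by norm_num)]
  rfl

theorem newton_sphere_average_general (hE : finrank ℝ E = 3) {r : ℝ} (hr : 0 < r) (y : E) :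
    (1 / (4 * Real.pi)) *
      ∫ ν : Metric.sphere (0 : E) 1, ‖r • (ν : E) - y‖⁻¹ ∂(volume : Measure E).toSphere =
        1 / max r ‖y‖ := by
  have : Nontrivial E := nontrivial_of_finrank_pos (R := ℝ) (by lia)
  obtain ⟨e, he, hy⟩ := exists_norm_eq_one_and_norm_smul_eq y
  have integrand_eq (ν : Metric.sphere (0 : E) 1) :
      ‖r • (ν : E) - y‖⁻¹ = (√(r ^ 2 + ‖y‖ ^ 2 - 2 * r * ‖y‖ * ⟪e, (ν : E)⟫))⁻¹ := by
    rw [← norm_smul_sub_smul_eq_sqrt (norm_eq_of_mem_sphere ν) he, hy]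
  have measurable_integrand :
      Measurable fun t : ℝ ↦ (√(r ^ 2 + ‖y‖ ^ 2 - 2 * r * ‖y‖ * t))⁻¹ := by fun_prop
  simp_rw [integrand_eq]
  rw [integral_comp_inner_toSphere hE he measurable_integrand.aestronglyMeasurable,
    integral_inv_sqrt_sq_add_sq_sub hr (norm_nonneg y), smul_eq_mul]
  field_simp
  norm_num

end Volume

/-- **Newton's theorem, sphere average form.**
For every `r > 0` and every `y ∈ ℝ³`, the average over the unit sphere `S²` (with its surface
measure of total mass `4π`) of `ν ↦ |rν − y|⁻¹` equals `1/max(r, |y|)`. -/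
theorem newton_sphere_average (r : ℝ) (hr : 0 < r) (y : EuclideanSpace ℝ (Fin 3)) :
    (1 / (4 * Real.pi)) *
      ∫ ν : Metric.sphere (0 : EuclideanSpace ℝ (Fin 3)) 1,
        ‖r • (↑ν : EuclideanSpace ℝ (Fin 3)) - y‖⁻¹
        ∂((volume : Measure (EuclideanSpace ℝ (Fin 3))).toSphere) = 1 / max r ‖y‖ :=
  newton_sphere_average_general finrank_euclideanSpace_fin hr y
end

section
/- (Hardy–Littlewood–Sobolev bound for the Coulomb energy.) There is a constant C > 0 such that for every measurable f : ℝ³ → ℝ, ∬_{ℝ³×ℝ³} |f(x)| |f(y)| |x − y|^{-1} dx dy ≤ C · ‖f‖_{L^{6/5}}². -/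
open MeasureTheory
open scoped ENNReal

open Module (finrank)
open Metric (ball)

/-!
Work in dimension `d` with the kernel `‖x - y‖ ^ (-s)`, the Coulomb case being `d = 3`, `s = 1`.
Since `h x * h y = min (h x) (h y) * max (h x) (h y)`, symmetry of the kernel reduces the energy of
`h = |f|` to integrating, against `h y`, the potential `∫ min (h x) b * ‖x - y‖ ^ (-s) dx` at height
`b = h y`. Split this potential at `‖x - y‖ = R`, bounding the minimum by `b` on the ball and by
`h x` outside it, where Hölder's inequality with `s * q = 2 * d` applies. For
`R ^ d = ‖h‖_p ^ p / b ^ p` both parts are a constant times `b ^ (p - 1) * ‖h‖_p ^ (2 - p)`, whose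
integral against `h y` is `‖h‖_p ^ 2`.
-/

section BalancedRadius

variable {N b : ℝ≥0∞}

lemma rpow_mul_rpow_mul_mul_rpow_neg_rpow (hN₀ : N ≠ 0) (hN : N ≠ ∞)
    (hb₀ : b ≠ 0) (hb : b ≠ ∞) (u v p w : ℝ) :
    b ^ u * N ^ v * (N * b ^ (-p)) ^ w = b ^ (u - p * w) * N ^ (v + w) := by
  rw [ENNReal.mul_rpow_of_ne_zero hN₀ (ENNReal.rpow_pos (pos_iff_ne_zero.2 hb₀) hb).ne',
    ← ENNReal.rpow_mul, sub_eq_add_neg, ENNReal.rpow_add _ _ hb₀ hb, ENNReal.rpow_add _ _ hN₀ hN,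
    neg_mul]
  ring

lemma exists_radius_mul_rpow_eq_and_mul_rpow_rpow_eq {p q s d : ℝ} (hpq : p.HolderConjugate q)
    (hd : d ≠ 0) (hsq : s * q = 2 * d) (hN₀ : N ≠ 0) (hN : N ≠ ∞) (hb₀ : b ≠ 0) (hb : b ≠ ∞) :
    ∃ R : ℝ, 0 < R ∧
      b * ENNReal.ofReal R ^ (d - s) = b ^ (p - 1) * N ^ (2 / p - 1) ∧
      N ^ (1 / p) * (ENNReal.ofReal R ^ (-d)) ^ (1 / q) = b ^ (p - 1) * N ^ (2 / p - 1) := by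
  have hp : p ≠ 0 := hpq.ne_zero
  set ρ : ℝ≥0∞ := (N * b ^ (-p)) ^ (1 / d)
  have hNb₀ : N * b ^ (-p) ≠ 0 :=
    mul_ne_zero hN₀ (ENNReal.rpow_pos (pos_iff_ne_zero.2 hb₀) hb).ne'
  have hNb : N * b ^ (-p) ≠ ∞ := ENNReal.mul_ne_top hN (ENNReal.rpow_ne_top_of_ne_zero hb₀ hb)
  have hρ₀ : ρ ≠ 0 := (ENNReal.rpow_pos (pos_iff_ne_zero.2 hNb₀) hNb).ne'
  have hρ : ρ ≠ ∞ := ENNReal.rpow_ne_top_of_ne_zero hNb₀ hNb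
  have hq_inv : q⁻¹ = 1 - p⁻¹ := eq_sub_of_add_eq' hpq.inv_add_inv_eq_one
  have hs : s = 2 * d * q⁻¹ := (eq_mul_inv_iff_mul_eq₀ hpq.symm.ne_zero).2 hsq
  have hnear : b * ρ ^ (d - s) = b ^ (p - 1) * N ^ (2 / p - 1) :=
    calc b * ρ ^ (d - s) = b ^ (1 : ℝ) * N ^ (0 : ℝ) * (N * b ^ (-p)) ^ (2 / p - 1) := by
          rw [← ENNReal.rpow_mul, ENNReal.rpow_one, ENNReal.rpow_zero, mul_one, hs, hq_inv]
          congr 2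
          field_simp
          ring
      _ = b ^ (p - 1) * N ^ (2 / p - 1) := by
          rw [rpow_mul_rpow_mul_mul_rpow_neg_rpow hN₀ hN hb₀ hb, zero_add]
          congr 2
          field_simp
          ring
  have hfar : N ^ (1 / p) * (ρ ^ (-d)) ^ (1 / q) = b ^ (p - 1) * N ^ (2 / p - 1) :=
    calc N ^ (1 / p) * (ρ ^ (-d)) ^ (1 / q)
        = b ^ (0 : ℝ) * N ^ (1 / p) * (N * b ^ (-p)) ^ (1 / p - 1) := by
          rw [← ENNReal.rpow_mul, ← ENNReal.rpow_mul, ENNReal.rpow_zero, one_mul, one_div q, hq_inv]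
          congr 2
          field_simp
          ring
      _ = b ^ (p - 1) * N ^ (2 / p - 1) := by
          rw [rpow_mul_rpow_mul_mul_rpow_neg_rpow hN₀ hN hb₀ hb]
          congr 2 <;> field_simp <;> ring
  refine ⟨ρ.toReal, ENNReal.toReal_pos hρ₀ hρ, ?_⟩
  rw [ENNReal.ofReal_toReal hρ]
  exact ⟨hnear, hfar⟩

end BalancedRadius

section MeasureSpace

variable {α : Type*} [MeasurableSpace α] {μ : Measure α}

lemma lintegral_min_mul_le {p q : ℝ} (hpq : p.HolderConjugate q) {h k : α → ℝ≥0∞}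
    (hh : AEMeasurable h μ) (hk : AEMeasurable k μ) (b : ℝ≥0∞) {S : Set α}
    (hS : MeasurableSet S) :
    ∫⁻ x, min (h x) b * k x ∂μ ≤
      b * ∫⁻ x in S, k x ∂μ +
        (∫⁻ x, h x ^ p ∂μ) ^ (1 / p) * (∫⁻ x in Sᶜ, k x ^ q ∂μ) ^ (1 / q) :=
  calc
    ∫⁻ x, min (h x) b * k x ∂μ
      = ∫⁻ x in S, min (h x) b * k x ∂μ + ∫⁻ x in Sᶜ, min (h x) b * k x ∂μ :=
        (lintegral_add_compl _ hS).symm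
    _ ≤ ∫⁻ x in S, b * k x ∂μ + ∫⁻ x in Sᶜ, h x * k x ∂μ := by
        gcongr <;> simp
    _ ≤ b * ∫⁻ x in S, k x ∂μ +
          (∫⁻ x in Sᶜ, h x ^ p ∂μ) ^ (1 / p) * (∫⁻ x in Sᶜ, k x ^ q ∂μ) ^ (1 / q) := by
        rw [lintegral_const_mul'' _ hk.restrict]
        gcongr
        exact ENNReal.lintegral_mul_le_Lp_mul_Lq _ hpq hh.restrict hk.restrict
    _ ≤ _ := by
        gcongr
        · exact one_div_nonneg.2 hpq.nonneg
        · exact Measure.restrict_le_self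

lemma lintegral_prod_mul_le_two_mul_lintegral_min [SFinite μ] {h : α → ℝ≥0∞}
    (hh : AEMeasurable h μ) {k : α × α → ℝ≥0∞} (hk : Measurable k) (hsymm : ∀ z, k z.swap = k z) :
    ∫⁻ z, h z.1 * h z.2 * k z ∂μ.prod μ ≤
      2 * ∫⁻ y, h y * ∫⁻ x, min (h x) (h y) * k (x, y) ∂μ ∂μ := by
  set G : α × α → ℝ≥0∞ := fun z => h z.2 * (min (h z.1) (h z.2) * k z) with hG
  have hGm : AEMeasurable G (μ.prod μ) := by fun_prop
  have mul_le_add_swap (z : α × α) : h z.1 * h z.2 * k z ≤ G z + G z.swap :=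
    calc h z.1 * h z.2 * k z
      = max (h z.1) (h z.2) * (min (h z.1) (h z.2) * k z) := by
          rw [← min_mul_max (h z.1)]; ring
      _ ≤ (h z.1 + h z.2) * (min (h z.1) (h z.2) * k z) := by
          gcongr
          exact max_le_add_of_nonneg zero_le zero_le
      _ = G z + G z.swap := by
          simp only [hG, Prod.fst_swap, Prod.snd_swap, hsymm, min_comm (h z.2)]; ring
  calc
    ∫⁻ z, h z.1 * h z.2 * k z ∂μ.prod μ
      ≤ ∫⁻ z, G z + G z.swap ∂μ.prod μ := lintegral_mono mul_le_add_swap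
    _ = 2 * ∫⁻ z, G z ∂μ.prod μ := by
        rw [lintegral_add_left' hGm, lintegral_prod_swap, two_mul]
    _ = 2 * ∫⁻ y, h y * ∫⁻ x, min (h x) (h y) * k (x, y) ∂μ ∂μ := by
        rw [lintegral_prod_symm _ hGm]
        congr 1
        refine lintegral_congr fun y => ?_
        have hky : Measurable fun x => k (x, y) := hk.comp measurable_prodMk_right
        have hmeas : AEMeasurable (fun x => min (h x) (h y) * k (x, y)) μ :=
          (hh.min aemeasurable_const).mul hky.aemeasurable
        exact lintegral_const_mul'' (h y) hmeas

end MeasureSpace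

section RieszKernel

variable {E : Type*} [NormedAddCommGroup E] [NormedSpace ℝ E] [FiniteDimensional ℝ E]
  [MeasurableSpace E] [BorelSpace E] (μ : Measure E) [μ.IsAddHaarMeasure]

open scoped Pointwise in
lemma setLIntegral_smul_enorm_rpow {R : ℝ} (hR : 0 < R) {S : Set E} (hS : MeasurableSet S)
    (a : ℝ) :
    ∫⁻ z in R • S, ‖z‖ₑ ^ a ∂μ =
      ENNReal.ofReal R ^ (finrank ℝ E + a) * ∫⁻ z in S, ‖z‖ₑ ^ a ∂μ := by
  have hR0 : ENNReal.ofReal R ≠ 0 := by simpa using hR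
  have hderiv (x : E) : HasFDerivWithinAt (R • ·) (R • ContinuousLinearMap.id ℝ E) S x :=
    ((hasFDerivAt_id x).const_smul R).hasFDerivWithinAt
  rw [← Set.image_smul, lintegral_image_eq_lintegral_abs_det_fderiv_mul μ hS (fun x _ => hderiv x)
    (smul_right_injective E hR.ne').injOn, ← lintegral_const_mul _ (by fun_prop)]
  congr! 2 with z
  have hdet : ENNReal.ofReal |(R • ContinuousLinearMap.id ℝ E).det| =
      ENNReal.ofReal R ^ (finrank ℝ E : ℝ) := by
    simp [ContinuousLinearMap.det, LinearMap.det_smul, abs_of_pos hR, ENNReal.ofReal_pow hR.le]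
  rw [hdet, enorm_smul, Real.enorm_of_nonneg hR.le,
    ENNReal.mul_rpow_of_ne_top ENNReal.ofReal_ne_top enorm_ne_top,
    ENNReal.rpow_add _ _ hR0 ENNReal.ofReal_ne_top, mul_assoc]

lemma setLIntegral_ball_enorm_rpow_neg_ne_top [Nontrivial E] {s : ℝ} (hs : s < finrank ℝ E) :
    ∫⁻ z in ball (0 : E) 1, ‖z‖ₑ ^ (-s) ∂μ ≠ ∞ := by
  have hint : IntegrableOn (fun z : E => ‖z‖ ^ (-s)) (ball 0 1) μ :=
    integrableOn_ball_of_norm_le_rpow (C := 1) Module.finrank_pos hs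
      (.of_forall fun z => by rw [one_mul, Real.norm_of_nonneg (by positivity)])
      (measurable_norm.pow_const _).aestronglyMeasurable
  convert! hint.2.ne using 1
  refine lintegral_congr_ae ?_
  filter_upwards [ae_restrict_of_ae (μ.ae_ne 0)] with z hz
  rw [Real.enorm_of_nonneg (by positivity),
    ← ENNReal.ofReal_rpow_of_pos (norm_pos_iff.2 hz), ofReal_norm]

lemma setLIntegral_compl_ball_enorm_rpow_neg_ne_top {r : ℝ} (hr : finrank ℝ E < r) :
    ∫⁻ z in (ball (0 : E) 1)ᶜ, ‖z‖ₑ ^ (-r) ∂μ ≠ ∞ := by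
  have hr0 : 0 ≤ r := (Nat.cast_nonneg _).trans hr.le
  have hbound : ∀ z ∈ (ball (0 : E) 1)ᶜ,
      ‖z‖ₑ ^ (-r) ≤ ENNReal.ofReal (2 ^ r) * ENNReal.ofReal ((1 + ‖z‖) ^ (-r)) := by
    intro z hz
    have hz1 : 1 ≤ ‖z‖ := by simpa using hz
    rw [← ofReal_norm, ENNReal.ofReal_rpow_of_pos (by positivity),
      ← ENNReal.ofReal_mul (by positivity)]
    refine ENNReal.ofReal_le_ofReal ?_
    calc ‖z‖ ^ (-r) = 2 ^ r * (2 * ‖z‖) ^ (-r) := by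
          rw [Real.mul_rpow zero_le_two (norm_nonneg z), ← mul_assoc, ← Real.rpow_add two_pos,
            add_neg_cancel, Real.rpow_zero, one_mul]
      _ ≤ 2 ^ r * (1 + ‖z‖) ^ (-r) := by
          gcongr 2 ^ r * ?_
          exact Real.rpow_le_rpow_of_nonpos (by positivity) (by linarith) (neg_nonpos.2 hr0)
  refine ne_top_of_le_ne_top ?_ ((setLIntegral_mono' measurableSet_ball.compl hbound).trans
    (setLIntegral_le_lintegral _ _))
  rw [lintegral_const_mul' _ _ ENNReal.ofReal_ne_top]
  exact ENNReal.mul_ne_top ENNReal.ofReal_ne_top (finite_integral_one_add_norm hr).ne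

open scoped Pointwise in
lemma lintegral_min_mul_enorm_sub_rpow_le_of_radius {p q s : ℝ} (hpq : p.HolderConjugate q)
    (hsq : s * q = 2 * finrank ℝ E) {h : E → ℝ≥0∞} (hh : AEMeasurable h μ) (b : ℝ≥0∞) (y : E)
    {R : ℝ} (hR : 0 < R) :
    ∫⁻ x, min (h x) b * ‖x - y‖ₑ ^ (-s) ∂μ ≤
      b * (ENNReal.ofReal R ^ (finrank ℝ E - s) * ∫⁻ z in ball (0 : E) 1, ‖z‖ₑ ^ (-s) ∂μ) +
        (∫⁻ x, h x ^ p ∂μ) ^ (1 / p) *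
          (ENNReal.ofReal R ^ (-finrank ℝ E : ℝ) *
            ∫⁻ z in (ball (0 : E) 1)ᶜ, ‖z‖ₑ ^ (-(2 * finrank ℝ E) : ℝ) ∂μ) ^ (1 / q) := by
  have hht : AEMeasurable (fun x => h (x + y)) μ :=
    hh.comp_quasiMeasurePreserving (measurePreserving_add_right μ y).quasiMeasurePreserving
  have hcompl : (R • ball (0 : E) 1)ᶜ = R • (ball (0 : E) 1)ᶜ :=
    (Set.image_compl_eq (MulAction.bijective₀ hR.ne')).symm
  have hpow (z : E) : (‖z‖ₑ ^ (-s)) ^ q = ‖z‖ₑ ^ (-(2 * finrank ℝ E) : ℝ) := by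
    rw [← ENNReal.rpow_mul, neg_mul, hsq]
  calc
    ∫⁻ x, min (h x) b * ‖x - y‖ₑ ^ (-s) ∂μ
      = ∫⁻ x, min (h (x + y)) b * ‖x‖ₑ ^ (-s) ∂μ := by
        simpa using
          (lintegral_add_right_eq_self (fun x => min (h x) b * ‖x - y‖ₑ ^ (-s)) y).symm
    _ ≤ b * ∫⁻ z in R • ball (0 : E) 1, ‖z‖ₑ ^ (-s) ∂μ +
          (∫⁻ x, h (x + y) ^ p ∂μ) ^ (1 / p) *
            (∫⁻ z in (R • ball (0 : E) 1)ᶜ, (‖z‖ₑ ^ (-s)) ^ q ∂μ) ^ (1 / q) :=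
        lintegral_min_mul_le hpq hht (by fun_prop) b (measurableSet_ball.const_smul₀ R)
    _ = _ := by
        simp_rw [hpow]
        rw [lintegral_add_right_eq_self (fun x => h x ^ p) y, hcompl,
          setLIntegral_smul_enorm_rpow μ hR measurableSet_ball,
          setLIntegral_smul_enorm_rpow μ hR measurableSet_ball.compl]
        ring_nf

lemma lintegral_min_mul_enorm_sub_rpow_le [Nontrivial E] {p q s : ℝ} (hpq : p.HolderConjugate q)
    (hsq : s * q = 2 * finrank ℝ E) {h : E → ℝ≥0∞} (hh : AEMeasurable h μ)
    (hN₀ : ∫⁻ x, h x ^ p ∂μ ≠ 0) (hN : ∫⁻ x, h x ^ p ∂μ ≠ ∞) {b : ℝ≥0∞} (hb₀ : b ≠ 0)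
    (hb : b ≠ ∞) (y : E) :
    ∫⁻ x, min (h x) b * ‖x - y‖ₑ ^ (-s) ∂μ ≤
      (∫⁻ z in ball (0 : E) 1, ‖z‖ₑ ^ (-s) ∂μ +
          (∫⁻ z in (ball (0 : E) 1)ᶜ, ‖z‖ₑ ^ (-(2 * finrank ℝ E) : ℝ) ∂μ) ^ (1 / q)) *
        (b ^ (p - 1) * (∫⁻ x, h x ^ p ∂μ) ^ (2 / p - 1)) := by
  obtain ⟨R, hR, hnear, hfar⟩ := exists_radius_mul_rpow_eq_and_mul_rpow_rpow_eq hpq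
    (Nat.cast_ne_zero.2 Module.finrank_pos.ne') hsq hN₀ hN hb₀ hb
  refine (lintegral_min_mul_enorm_sub_rpow_le_of_radius μ hpq hsq hh b y hR).trans_eq ?_
  rw [ENNReal.mul_rpow_of_nonneg _ _ hpq.symm.one_div_nonneg, ← mul_assoc, ← mul_assoc, hnear,
    hfar]
  ring

lemma exists_lintegral_min_mul_enorm_sub_rpow_le [Nontrivial E] {p q s : ℝ}
    (hpq : p.HolderConjugate q) (hsq : s * q = 2 * finrank ℝ E) (hp2 : p < 2) :
    ∃ C : ℝ, 0 < C ∧ ∀ h : E → ℝ≥0∞, AEMeasurable h μ → ∀ (b : ℝ≥0∞) (y : E),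
      ∫⁻ x, min (h x) b * ‖x - y‖ₑ ^ (-s) ∂μ ≤
        ENNReal.ofReal C * (b ^ (p - 1) * (∫⁻ x, h x ^ p ∂μ) ^ (2 / p - 1)) := by
  set A := ∫⁻ z in ball (0 : E) 1, ‖z‖ₑ ^ (-s) ∂μ +
    (∫⁻ z in (ball (0 : E) 1)ᶜ, ‖z‖ₑ ^ (-(2 * finrank ℝ E) : ℝ) ∂μ) ^ (1 / q)
  have hd : (0 : ℝ) < finrank ℝ E := Nat.cast_pos.2 Module.finrank_pos
  have hp1 : 0 < p - 1 := sub_pos.2 hpq.lt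
  have hexp : 0 < 2 / p - 1 := sub_pos.2 ((one_lt_div hpq.pos).2 hp2)
  have hs : s < finrank ℝ E := by
    have hq2 : 2 < q := by nlinarith [hpq.mul_eq_add, hpq.symm.lt]
    nlinarith
  have hA : A ≠ ∞ := ENNReal.add_ne_top.2 ⟨setLIntegral_ball_enorm_rpow_neg_ne_top μ hs,
    ENNReal.rpow_ne_top_of_nonneg hpq.symm.one_div_nonneg
      (setLIntegral_compl_ball_enorm_rpow_neg_ne_top μ (by linarith))⟩
  refine ⟨A.toReal + 1, by positivity, fun h hh b y => ?_⟩
  have hC : ENNReal.ofReal (A.toReal + 1) ≠ 0 := (ENNReal.ofReal_pos.2 (by positivity)).ne'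
  rcases eq_or_ne b 0 with rfl | hb₀
  · simp
  rcases eq_or_ne (∫⁻ x, h x ^ p ∂μ) 0 with hN₀ | hN₀
  · have hzero : ∀ᵐ x ∂μ, h x = 0 := by
      filter_upwards [(lintegral_eq_zero_iff' (hh.pow_const p)).1 hN₀] with x hx
      exact (ENNReal.rpow_eq_zero_iff_of_pos hpq.pos).1 hx
    rw [lintegral_congr_ae (g := 0) (by filter_upwards [hzero] with x hx; simp [hx])]
    simp
  rcases eq_or_ne b ∞ with rfl | hb
  · simp [hp1, hexp.not_gt, hC, hN₀]
  rcases eq_or_ne (∫⁻ x, h x ^ p ∂μ) ∞ with hN | hN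
  · simp [hN, hp1.not_gt, hexp, hC, hb₀]
  refine (lintegral_min_mul_enorm_sub_rpow_le μ hpq hsq hh hN₀ hN hb₀ hb y).trans ?_
  gcongr
  exact (ENNReal.le_ofReal_iff_toReal_le hA (by positivity)).2 (by linarith)

theorem exists_lintegral_prod_mul_mul_enorm_sub_rpow_le [Nontrivial E] {p q s : ℝ}
    (hpq : p.HolderConjugate q) (hsq : s * q = 2 * finrank ℝ E) (hp2 : p < 2) :
    ∃ C : ℝ, 0 < C ∧ ∀ h : E → ℝ≥0∞, AEMeasurable h μ →
      ∫⁻ z, h z.1 * h z.2 * ‖z.1 - z.2‖ₑ ^ (-s) ∂μ.prod μ ≤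
        ENNReal.ofReal C * (∫⁻ x, h x ^ p ∂μ) ^ (2 / p) := by
  have hexp : 0 < 2 / p - 1 := sub_pos.2 ((one_lt_div hpq.pos).2 hp2)
  obtain ⟨C, hC, hpot⟩ := exists_lintegral_min_mul_enorm_sub_rpow_le μ hpq hsq hp2
  refine ⟨2 * C, by positivity, fun h hh => ?_⟩
  set N := ∫⁻ x, h x ^ p ∂μ
  calc
    ∫⁻ z, h z.1 * h z.2 * ‖z.1 - z.2‖ₑ ^ (-s) ∂μ.prod μ
      ≤ 2 * ∫⁻ y, h y * ∫⁻ x, min (h x) (h y) * ‖x - y‖ₑ ^ (-s) ∂μ ∂μ :=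
        lintegral_prod_mul_le_two_mul_lintegral_min (k := fun z => ‖z.1 - z.2‖ₑ ^ (-s)) hh
          (by fun_prop) fun z => by simp only [Prod.fst_swap, Prod.snd_swap, enorm_sub_rev]
    _ ≤ 2 * ∫⁻ y, h y * (ENNReal.ofReal C * (h y ^ (p - 1) * N ^ (2 / p - 1))) ∂μ := by
        gcongr with y
        exact hpot h hh (h y) y
    _ = 2 * ∫⁻ y, ENNReal.ofReal C * N ^ (2 / p - 1) * h y ^ p ∂μ := by
        congr! 3 with y
        rw [← add_sub_cancel 1 p, ENNReal.rpow_add_of_nonneg 1 _ zero_le_one hpq.sub_one_pos.le,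
          ENNReal.rpow_one, add_sub_cancel]
        ring
    _ = ENNReal.ofReal (2 * C) * N ^ (2 / p) := by
        rw [lintegral_const_mul'' _ (hh.pow_const p), ← sub_add_cancel (2 / p) 1,
          ENNReal.rpow_add_of_nonneg _ 1 hexp.le zero_le_one, ENNReal.rpow_one, sub_add_cancel,
          ENNReal.ofReal_mul zero_le_two, ENNReal.ofReal_ofNat]
        ring

end RieszKernel

theorem hls_coulomb_bound_general {E F : Type*} [NormedAddCommGroup E] [NormedSpace ℝ E]
    [FiniteDimensional ℝ E] [MeasurableSpace E] [BorelSpace E] (μ : Measure E)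
    [μ.IsAddHaarMeasure] [TopologicalSpace F] [ContinuousENorm F] {s : ℝ} (hs₀ : 0 < s)
    (hs : s < finrank ℝ E) :
    ∃ C : ℝ, 0 < C ∧ ∀ f : E → F, AEStronglyMeasurable f μ →
      ∫⁻ z, ‖f z.1‖ₑ * ‖f z.2‖ₑ * ‖z.1 - z.2‖ₑ ^ (-s) ∂μ.prod μ ≤
        ENNReal.ofReal C *
          eLpNorm f (ENNReal.ofReal (2 * finrank ℝ E / (2 * finrank ℝ E - s))) μ ^ 2 := by
  have : Nontrivial E := Module.nontrivial_of_finrank_pos (R := ℝ) (by exact_mod_cast hs₀.trans hs)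
  set d : ℝ := (finrank ℝ E : ℝ)
  set p := 2 * d / (2 * d - s) with hp
  have hpq : p.HolderConjugate (2 * d / s) := by
    rw [Real.holderConjugate_iff, hp, one_lt_div (by linarith), inv_div, inv_div]
    have hd : d ≠ 0 := (hs₀.trans hs).ne'
    refine ⟨by linarith, ?_⟩
    field_simp
    ring
  have hp2 : p < 2 := (div_lt_iff₀ (by linarith)).2 (by linarith)
  obtain ⟨C, hC, hbound⟩ :=
    exists_lintegral_prod_mul_mul_enorm_sub_rpow_le μ hpq (mul_div_cancel₀ _ hs₀.ne') hp2
  refine ⟨C, hC, fun f hf => (hbound _ hf.enorm).trans_eq ?_⟩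
  rw [eLpNorm_eq_lintegral_rpow_enorm_toReal (by simpa using hpq.pos) ENNReal.ofReal_ne_top,
    ENNReal.toReal_ofReal hpq.nonneg, ← ENNReal.rpow_mul_natCast, one_div_mul_eq_div]
  norm_cast

/-- **Hardy–Littlewood–Sobolev bound for the Coulomb energy.**
There is a constant `C > 0` such that for every measurable `f : ℝ³ → ℝ`,
`∬ |f(x)| |f(y)| |x − y|⁻¹ dx dy ≤ C ‖f‖_{6/5}²` (both sides possibly infinite). -/
theorem hls_coulomb_bound :
    ∃ C : ℝ, 0 < C ∧ ∀ f : EuclideanSpace ℝ (Fin 3) → ℝ, Measurable f →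
      ∫⁻ p : EuclideanSpace ℝ (Fin 3) × EuclideanSpace ℝ (Fin 3),
          ENNReal.ofReal (|f p.1| * |f p.2|) * (ENNReal.ofReal ‖p.1 - p.2‖)⁻¹ ≤
        ENNReal.ofReal C * eLpNorm f (6 / 5) volume ^ 2 := by
  have hexp : ENNReal.ofReal (2 * 3 / (2 * 3 - 1)) = 6 / 5 := by
    norm_num [ENNReal.ofReal_div_of_pos]
  obtain ⟨C, hC, hbound⟩ := hls_coulomb_bound_general (E := EuclideanSpace ℝ (Fin 3)) (F := ℝ)
    volume one_pos (by simp)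
  exact ⟨C, hC, fun f hf => by
    simpa [hexp, ENNReal.ofReal_mul, Real.enorm_eq_ofReal_abs, ENNReal.rpow_neg_one,
      Measure.volume_eq_prod] using hbound f hf.aestronglyMeasurable⟩
end
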